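/- arXiv:2011.00119 — 3 statements merged into one kernel-verified Lean document; each statement's English description precedes it below -/
import Mathlib

section
/- Let k > 0 and let X be an integrable real-valued random variable on a probability space. Then for every q ∈ ℝ the random variable ρ_k(X − q) is integrable, and the function F(q) = E[ρ_k(X − q)] is differentiable at every q ∈ ℝ with derivative F'(q) = −E[ψ_k(X − q)]. -/
open MeasureTheory

/-- The Huber influence function `ψ_k(t) = max (min t k) (-k)`. -/
noncomputable def huberPsi (k t : ℝ) : ℝ := max (min t k) (-k)

/-- The Huber loss `ρ_k(t) = t²/2` for `|t| ≤ k` and `ρ_k(t) = k|t| − k²/2` otherwise. -/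
noncomputable def huberRho (k t : ℝ) : ℝ :=
  if |t| ≤ k then t ^ 2 / 2 else k * |t| - k ^ 2 / 2

theorem huberRho_eq_psi (k : ℝ) (hk : 0 < k) (t : ℝ) :
    huberRho k t = huberPsi k t * t - huberPsi k t ^ 2 / 2 := by
  unfold huberRho huberPsi
  split_ifs with h
  · rw [abs_le] at h
    rw [min_eq_left h.2, max_eq_left h.1]; ring
  · rcases le_total 0 t with h0 | h0
    · rw [abs_of_nonneg h0] at h ⊢
      rw [min_eq_right (by linarith), max_eq_left (by linarith)]
    · rw [abs_of_nonpos h0] at h ⊢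
      rw [min_eq_left (by linarith), max_eq_right (by linarith)]; ring

theorem abs_huberPsi_le (k : ℝ) (hk : 0 < k) (t : ℝ) : |huberPsi k t| ≤ k := by
  unfold huberPsi
  rw [abs_le]
  exact ⟨le_max_right _ _, max_le (min_le_right _ _) (by linarith)⟩

/-- Variational inequality for the projection onto `[-k, k]`. -/
theorem huberPsi_proj (k : ℝ) (hk : 0 < k) (t p : ℝ) (hp : |p| ≤ k) :
    (t - huberPsi k t) * (p - huberPsi k t) ≤ 0 := by
  rw [abs_le] at hp
  unfold huberPsi
  rcases le_total t k with h | h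
  · rw [min_eq_left h]
    rcases le_total t (-k) with h' | h'
    · rw [max_eq_right h']; nlinarith
    · rw [max_eq_left h']; simp
  · rw [min_eq_right h, max_eq_left (by linarith)]; nlinarith

theorem huberRho_taylor (k : ℝ) (hk : 0 < k) (s t : ℝ) :
    |huberRho k s - huberRho k t - (s - t) * huberPsi k t| ≤ (s - t) ^ 2 / 2 := by
  have h1 := huberPsi_proj k hk s _ (abs_huberPsi_le k hk t)
  have h2 := huberPsi_proj k hk t _ (abs_huberPsi_le k hk s)
  rw [huberRho_eq_psi k hk, huberRho_eq_psi k hk]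
  generalize huberPsi k s = r at *
  generalize huberPsi k t = p at *
  rw [abs_le]
  constructor
  · nlinarith [sq_nonneg (r - p), sq_nonneg (s - t)]
  · nlinarith [sq_nonneg ((s - r) - (t - p))]

theorem hasDerivAt_huberRho (k : ℝ) (hk : 0 < k) (t : ℝ) :
    HasDerivAt (huberRho k) (huberPsi k t) t := by
  rw [hasDerivAt_iff_isLittleO]
  have h : (fun s : ℝ => (s - t) ^ 2) =o[nhds t] fun s => s - t :=
    by simpa using Asymptotics.isLittleO_pow_sub_sub t (m := 2) (by norm_num)
  refine Asymptotics.IsBigO.trans_isLittleO (Asymptotics.IsBigO.of_bound 1 ?_) h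
  refine Filter.Eventually.of_forall fun s => ?_
  have := huberRho_taylor k hk s t
  rw [Real.norm_eq_abs, Real.norm_eq_abs, abs_of_nonneg (sq_nonneg (s - t)), smul_eq_mul]
  nlinarith [sq_nonneg (s - t)]

theorem abs_huberRho_le (k : ℝ) (hk : 0 < k) (t : ℝ) : |huberRho k t| ≤ k * |t| := by
  unfold huberRho
  have := abs_nonneg t
  split_ifs with h
  · rw [abs_of_nonneg (by positivity), ← sq_abs]; nlinarith
  · rw [abs_of_nonneg (by nlinarith)]; nlinarith

/-- For an integrable real random variable `X`, the Huber loss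
`ρ_k(X − q)` is integrable for every `q`, and `q ↦ E[ρ_k(X − q)]` is differentiable
with derivative `−E[ψ_k(X − q)]`. -/
theorem integrable_huberRho_and_hasDerivAt_expected_huberRho
    {Ω : Type*} [MeasurableSpace Ω] (P : Measure Ω) [IsProbabilityMeasure P]
    (k : ℝ) (hk : 0 < k) (X : Ω → ℝ) (hX : Integrable X P) :
    (∀ q : ℝ, Integrable (fun ω => huberRho k (X ω - q)) P) ∧
    (∀ q : ℝ, HasDerivAt (fun q' : ℝ => ∫ ω, huberRho k (X ω - q') ∂P)
      (-∫ ω, huberPsi k (X ω - q) ∂P) q) := by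
  have hXq : ∀ q : ℝ, Integrable (fun ω => X ω - q) P := fun q => hX.sub (integrable_const q)
  have hcr : Continuous (huberRho k) :=
    continuous_iff_continuousAt.2 fun t => (hasDerivAt_huberRho k hk t).continuousAt
  have hcp : Continuous (huberPsi k) := by unfold huberPsi; fun_prop
  have hint : ∀ q : ℝ, Integrable (fun ω => huberRho k (X ω - q)) P := fun q =>
    ((hXq q).abs.const_mul k).mono' (hcr.comp_aestronglyMeasurable (hXq q).1)
      (Filter.Eventually.of_forall fun ω => abs_huberRho_le k hk _)
  refine ⟨hint, fun q => ?_⟩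
  rw [← integral_neg]
  refine (hasDerivAt_integral_of_dominated_loc_of_deriv_le (s := Set.univ) (bound := fun _ => k)
    (F := fun q' ω => huberRho k (X ω - q')) (F' := fun q' ω => -huberPsi k (X ω - q'))
    Filter.univ_mem (Filter.Eventually.of_forall fun q' => (hint q').1) (hint q)
    (hcp.comp_aestronglyMeasurable (hXq q).1).neg ?_ (integrable_const k) ?_).2
  · refine Filter.Eventually.of_forall fun ω x _ => ?_
    rw [norm_neg]; exact abs_huberPsi_le k hk _
  · refine Filter.Eventually.of_forall fun ω x _ => ?_
    have := (hasDerivAt_huberRho k hk (X ω - x)).comp x ((hasDerivAt_id x).const_sub (X ω))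
    simpa [Function.comp_def] using this
end

section
/- Let k > 0 and let X be an integrable real-valued random variable on a probability space, and define F(q) = E[ρ_k(X − q)] for q ∈ ℝ. Then a point q₀ ∈ ℝ is a minimizer of F over ℝ (i.e., F(q₀) ≤ F(q) for all q ∈ ℝ) if and only if E[ψ_k(X − q₀)] = 0. -/
open MeasureTheory

lemma huber_cases (k t : ℝ) (hk : 0 < k) :
    (t < -k ∧ huberPsi k t = -k ∧ huberRho k t = -k * t - k ^ 2 / 2) ∨
    (-k ≤ t ∧ t ≤ k ∧ huberPsi k t = t ∧ huberRho k t = t ^ 2 / 2) ∨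
    (k < t ∧ huberPsi k t = k ∧ huberRho k t = k * t - k ^ 2 / 2) := by
  unfold huberPsi huberRho
  rcases lt_or_ge t (-k) with h | h
  · left
    have h1 : |t| = -t := abs_of_neg (by linarith)
    rw [h1, if_neg (by linarith), min_eq_left (by linarith), max_eq_right h.le]
    exact ⟨h, rfl, by ring⟩
  · right
    rcases le_or_gt t k with h' | h'
    · left
      rw [if_pos (abs_le.2 ⟨h, h'⟩), min_eq_left h', max_eq_left h]
      exact ⟨h, h', rfl, rfl⟩
    · right
      have h1 : |t| = t := abs_of_pos (by linarith)
      rw [h1, if_neg (by linarith), min_eq_right h'.le, max_eq_left (by linarith)]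
      exact ⟨h', rfl, rfl⟩

lemma huberRho_eq (k t : ℝ) (hk : 0 < k) :
    huberRho k t = huberPsi k t * t - huberPsi k t ^ 2 / 2 := by
  rcases huber_cases k t hk with ⟨_, h1, h2⟩ | ⟨_, _, h1, h2⟩ | ⟨_, h1, h2⟩ <;>
    rw [h1, h2] <;> ring

lemma huberPsi_abs_le (k t : ℝ) (hk : 0 < k) : |huberPsi k t| ≤ k := by
  rw [abs_le]
  rcases huber_cases k t hk with ⟨_, h1, h2⟩ | ⟨_, _, h1, h2⟩ | ⟨_, h1, h2⟩ <;>
    rw [h1] <;> constructor <;> linarith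

/-- Tangent lines lie below the loss. -/
lemma huberRho_lower (k t s : ℝ) (hk : 0 < k) :
    huberRho k t + huberPsi k t * s ≤ huberRho k (t + s) := by
  have hu := abs_le.1 (huberPsi_abs_le k t hk)
  rw [huberRho_eq k t hk]
  generalize huberPsi k t = u at hu
  rcases huber_cases k (t + s) hk with ⟨h, _, h2⟩ | ⟨_, _, _, h2⟩ | ⟨h, _, h2⟩ <;> rw [h2]
  · nlinarith [mul_nonneg (sub_nonneg.2 hu.1) (sub_nonneg.2 h.le), sq_nonneg (u + k)]
  · nlinarith [sq_nonneg (t + s - u)]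
  · nlinarith [mul_nonneg (sub_nonneg.2 hu.2) (sub_nonneg.2 h.le), sq_nonneg (u - k)]

lemma huberRho_le (k x w : ℝ) (hk : 0 < k) :
    huberRho k x ≤ (x - w) ^ 2 / 2 + k * |w| := by
  have hu := abs_le.1 (huberPsi_abs_le k x hk)
  rw [huberRho_eq k x hk]
  generalize huberPsi k x = u at hu
  have h : u * w ≤ k * |w| := by
    calc u * w ≤ |u * w| := le_abs_self _
      _ = |u| * |w| := abs_mul _ _
      _ ≤ k * |w| := mul_le_mul_of_nonneg_right (abs_le.2 hu) (abs_nonneg _)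
  nlinarith [sq_nonneg (x - w - u)]

/-- Quadratic upper bound for the loss. -/
lemma huberRho_upper (k t s : ℝ) (hk : 0 < k) :
    huberRho k (t + s) ≤ huberRho k t + huberPsi k t * s + s ^ 2 / 2 := by
  have h := huberRho_le k (t + s) (t - huberPsi k t) hk
  have h' : k * |t - huberPsi k t| = huberPsi k t * (t - huberPsi k t) := by
    rcases huber_cases k t hk with ⟨h0, h1, _⟩ | ⟨_, _, h1, _⟩ | ⟨h0, h1, _⟩ <;> rw [h1]
    · rw [abs_of_neg (by linarith)]; ring
    · simp
    · rw [abs_of_pos (by linarith)]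
  rw [h'] at h
  rw [huberRho_eq k t hk]
  nlinarith

lemma continuous_huberPsi (k : ℝ) : Continuous (huberPsi k) := by
  unfold huberPsi; fun_prop

lemma integrable_huberPsi {Ω : Type*} [MeasurableSpace Ω] (P : Measure Ω) [IsProbabilityMeasure P]
    (k : ℝ) (hk : 0 < k) (X : Ω → ℝ) (hX : Integrable X P) :
    Integrable (fun ω => huberPsi k (X ω)) P :=
  Integrable.of_bound ((continuous_huberPsi k).comp_aestronglyMeasurable hX.aestronglyMeasurable) k
    (Filter.Eventually.of_forall fun ω => huberPsi_abs_le k (X ω) hk)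

lemma integrable_huberRho {Ω : Type*} [MeasurableSpace Ω] (P : Measure Ω) [IsProbabilityMeasure P]
    (k : ℝ) (hk : 0 < k) (X : Ω → ℝ) (hX : Integrable X P) :
    Integrable (fun ω => huberRho k (X ω)) P := by
  have hm : AEStronglyMeasurable (fun ω => huberRho k (X ω)) P := by
    have hc : Continuous (huberRho k) := by
      have : huberRho k = fun t => huberPsi k t * t - huberPsi k t ^ 2 / 2 :=
        funext fun t => huberRho_eq k t hk
      rw [this]
      have := continuous_huberPsi k
      fun_prop
    exact hc.comp_aestronglyMeasurable hX.aestronglyMeasurable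
  refine Integrable.mono' (hX.abs.const_mul k) hm (Filter.Eventually.of_forall fun ω => ?_)
  have h1 := huberRho_le k (X ω) (X ω) hk
  have h2 : 0 ≤ huberRho k (X ω) := by
    rcases huber_cases k (X ω) hk with ⟨h, _, h2⟩ | ⟨_, _, _, h2⟩ | ⟨h, _, h2⟩ <;> rw [h2] <;>
      nlinarith [sq_nonneg (X ω)]
  rw [Real.norm_eq_abs, abs_of_nonneg h2]
  simpa using h1

/-- For an integrable real random variable `X`, `q₀` minimizes
`q ↦ E[ρ_k(X − q)]` over `ℝ` if and only if `E[ψ_k(X − q₀)] = 0`. -/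
theorem isMinOn_expected_huberRho_iff_integral_huberPsi_eq_zero
    {Ω : Type*} [MeasurableSpace Ω] (P : Measure Ω) [IsProbabilityMeasure P]
    (k : ℝ) (hk : 0 < k) (X : Ω → ℝ) (hX : Integrable X P) (q₀ : ℝ) :
    (∀ q : ℝ, ∫ ω, huberRho k (X ω - q₀) ∂P ≤ ∫ ω, huberRho k (X ω - q) ∂P)
      ↔ ∫ ω, huberPsi k (X ω - q₀) ∂P = 0 := by
  have hXq : ∀ q : ℝ, Integrable (fun ω => X ω - q) P := fun q => hX.sub (integrable_const q)
  have hρ : ∀ q : ℝ, Integrable (fun ω => huberRho k (X ω - q)) P := fun q =>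
    integrable_huberRho P k hk _ (hXq q)
  have hψ : Integrable (fun ω => huberPsi k (X ω - q₀)) P :=
    integrable_huberPsi P k hk _ (hXq q₀)
  have hlin : ∀ s : ℝ, ∫ ω, (huberRho k (X ω - q₀) + huberPsi k (X ω - q₀) * s) ∂P =
      ∫ ω, huberRho k (X ω - q₀) ∂P + (∫ ω, huberPsi k (X ω - q₀) ∂P) * s := fun s => by
    rw [integral_add (hρ q₀) (hψ.mul_const s), integral_mul_const]
  constructor
  · intro h
    set Ψ := ∫ ω, huberPsi k (X ω - q₀) ∂P with hΨ
    have h1 := h (q₀ + Ψ)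
    have h2 : ∫ ω, huberRho k (X ω - (q₀ + Ψ)) ∂P ≤
        ∫ ω, ((huberRho k (X ω - q₀) + huberPsi k (X ω - q₀) * (-Ψ)) + (-Ψ) ^ 2 / 2) ∂P := by
      refine integral_mono (hρ _)
        (((hρ q₀).add (hψ.mul_const (-Ψ))).add (integrable_const _)) fun ω => ?_
      have := huberRho_upper k (X ω - q₀) (-Ψ) hk
      rwa [show X ω - q₀ + -Ψ = X ω - (q₀ + Ψ) by ring] at this
    have hi : Integrable
        (fun ω => huberRho k (X ω - q₀) + huberPsi k (X ω - q₀) * (-Ψ)) P :=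
      (hρ q₀).add (hψ.mul_const (-Ψ))
    rw [integral_add hi (integrable_const _), hlin] at h2
    simp only [integral_const, probReal_univ, one_smul] at h2
    have : Ψ ^ 2 ≤ 0 := by nlinarith
    exact pow_eq_zero_iff (two_ne_zero) |>.1 (le_antisymm this (sq_nonneg _))
  · intro h q
    have h2 : ∫ ω, (huberRho k (X ω - q₀) + huberPsi k (X ω - q₀) * (q₀ - q)) ∂P ≤
        ∫ ω, huberRho k (X ω - q) ∂P := by
      refine integral_mono ((hρ q₀).add (hψ.mul_const _)) (hρ q) fun ω => ?_
      have := huberRho_lower k (X ω - q₀) (q₀ - q) hk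
      rwa [show X ω - q₀ + (q₀ - q) = X ω - q by ring] at this
    rw [hlin, h] at h2
    linarith
end

section
/- (Algebraic core of Corollary 1 of the paper.) Let Υ be an n×n positive definite real matrix and Ψ an n×m real matrix such that ΨᵀΥ⁻¹Ψ is invertible. Then the matrix Υ − Ψ(ΨᵀΥ⁻¹Ψ)⁻¹Ψᵀ is positive semidefinite. -/
open Matrix

/-- (Algebraic core of Corollary 1.) If `Υ ≻ 0` and `ΨᵀΥ⁻¹Ψ` is
invertible, then `Υ − Ψ(ΨᵀΥ⁻¹Ψ)⁻¹Ψᵀ` is positive semidefinite. -/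
theorem envelope_gmm_efficiency_core
    (n m : ℕ) (Υ : Matrix (Fin n) (Fin n) ℝ) (hΥ : Υ.PosDef)
    (Ψ : Matrix (Fin n) (Fin m) ℝ) (hΨ : IsUnit (Ψᵀ * Υ⁻¹ * Ψ)) :
    (Υ - Ψ * (Ψᵀ * Υ⁻¹ * Ψ)⁻¹ * Ψᵀ).PosSemidef := by
  have hT : Υᵀ = Υ := by
    have h := hΥ.isHermitian.eq
    rwa [conjTranspose_eq_transpose_of_trivial] at h
  have hdet : IsUnit Υ.det := (Matrix.isUnit_iff_isUnit_det _).1 hΥ.isUnit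
  have hSdet := (Matrix.isUnit_iff_isUnit_det _).1 hΨ
  have hST : (Ψᵀ * Υ⁻¹ * Ψ)ᵀ = Ψᵀ * Υ⁻¹ * Ψ := by
    simp [transpose_mul, transpose_nonsing_inv, hT, Matrix.mul_assoc]
  have hPT : (Ψ * (Ψᵀ * Υ⁻¹ * Ψ)⁻¹ * Ψᵀ)ᵀ = Ψ * (Ψᵀ * Υ⁻¹ * Ψ)⁻¹ * Ψᵀ := by
    rw [transpose_mul, transpose_mul, transpose_nonsing_inv, hST, transpose_transpose,
      ← Matrix.mul_assoc Ψ]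
  have hPP : (Ψ * (Ψᵀ * Υ⁻¹ * Ψ)⁻¹ * Ψᵀ) * Υ⁻¹ * (Ψ * (Ψᵀ * Υ⁻¹ * Ψ)⁻¹ * Ψᵀ)
      = Ψ * (Ψᵀ * Υ⁻¹ * Ψ)⁻¹ * Ψᵀ := by
    calc _ = Ψ * ((Ψᵀ * Υ⁻¹ * Ψ)⁻¹ * (Ψᵀ * Υ⁻¹ * Ψ)) * (Ψᵀ * Υ⁻¹ * Ψ)⁻¹ * Ψᵀ := by
          simp only [Matrix.mul_assoc]
      _ = _ := by rw [nonsing_inv_mul _ hSdet, Matrix.mul_one]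
  generalize Ψ * (Ψᵀ * Υ⁻¹ * Ψ)⁻¹ * Ψᵀ = P at hPT hPP ⊢
  have key := hΥ.inv.posSemidef.mul_mul_conjTranspose_same (Υ - P)
  have e : (Υ - P) * Υ⁻¹ * (Υ - P)ᴴ = Υ - P := by
    rw [conjTranspose_eq_transpose_of_trivial, transpose_sub, hT, hPT, Matrix.sub_mul,
      mul_nonsing_inv _ hdet, Matrix.sub_mul, Matrix.one_mul, Matrix.mul_sub, hPP,
      Matrix.mul_assoc, nonsing_inv_mul _ hdet, Matrix.mul_one]
    simp
  rwa [e] at key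
end
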